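/- Let w : ℝ² → ℝ² be a smooth map with ‖w(x)‖ = 1 for all x ∈ ℝ² which satisfies the harmonic map equation Δw + |∇w|² w = 0 on ℝ² (where Δ acts componentwise and |∇w|² = Σ_{i,j} (∂_i w_j)²), and suppose ∫_{ℝ²} |∇w|² dx < ∞. Then w is constant. -/

import Mathlib

open MeasureTheory

noncomputable section

/-- Standard basis vectors of `ℝ²`. -/
def E2 (i : Fin 2) : EuclideanSpace ℝ (Fin 2) := EuclideanSpace.single i 1

/-- Componentwise Laplacian of a map `ℝ² → ℝ²`. -/
def lap2 (w : EuclideanSpace ℝ (Fin 2) → EuclideanSpace ℝ (Fin 2))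
    (x : EuclideanSpace ℝ (Fin 2)) : EuclideanSpace ℝ (Fin 2) :=
  ∑ i : Fin 2, fderiv ℝ (fun y => fderiv ℝ w y (E2 i)) x (E2 i)

/-- `|∇w|² = Σ_{i,j} (∂_i w_j)²` for a map `ℝ² → ℝ²`. -/
def gradSq2 (w : EuclideanSpace ℝ (Fin 2) → EuclideanSpace ℝ (Fin 2))
    (x : EuclideanSpace ℝ (Fin 2)) : ℝ :=
  ∑ i : Fin 2, ∑ j : Fin 2, (fderiv ℝ w x (E2 i) j) ^ 2

/-!
Locally a map to the circle is `w = e^{iφ}`, and `w` is harmonic exactly when `φ` is. The one-form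
`dφ = ω(w, dw)` is globally defined without lifting `w`, and it is closed and coclosed, so by the
Cauchy-Riemann equations `∂₁φ - i ∂₂φ` is an entire function. Finite energy puts it in `L²`, and an
entire function in `Lᵖ` with `p < ∞` vanishes: by the mean value property over unit discs and
Hölder it is bounded, hence constant by Liouville. Thus `dφ = 0`, and since `|dw| = |dφ|`, `w` is
constant.
-/

open Complex InnerProductSpace Laplacian Metric Module Set
open scoped ENNReal Real

section Liouville

theorem lintegral_eq_lintegral_circleMap {f : ℂ → ℝ≥0∞} (hf : Measurable f) (c : ℂ) :
    ∫⁻ z, f z = ∫⁻ r in Ioi (0 : ℝ), ∫⁻ θ in Ioo (-π) π,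
      ENNReal.ofReal r * f (circleMap c r θ) := by
  have symm_polarCoord (p : ℝ × ℝ) :
      c + Complex.polarCoord.symm p = circleMap c p.1 p.2 := by
    rw [Complex.polarCoord_symm_apply, circleMap, exp_mul_I, ofReal_cos, ofReal_sin]
  have hcircle : Measurable fun p : ℝ × ℝ => circleMap c p.1 p.2 := by
    unfold circleMap
    fun_prop
  rw [← lintegral_add_left_eq_self f c, ← Complex.lintegral_comp_polarCoord_symm]
  simp only [symm_polarCoord, smul_eq_mul, polarCoord_target]
  rw [Measure.volume_eq_prod, ← Measure.prod_restrict, lintegral_prod]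
  exact ((ENNReal.measurable_ofReal.comp measurable_fst).mul (hf.comp hcircle)).aemeasurable

variable {F : Type*} [NormedAddCommGroup F] [NormedSpace ℂ F]

theorem lintegral_enorm_center_le_lintegral_circleMap [CompleteSpace F] {f : ℂ → F} {c : ℂ}
    {r : ℝ} (hf : DiffContOnCl ℂ f (ball c |r|)) :
    ∫⁻ _ in Ioo (-π) π, ‖f c‖ₑ ≤ ∫⁻ θ in Ioo (-π) π, ‖f (circleMap c r θ)‖ₑ := by
  have integral_eq : ∫ θ in Ioo (-π) π, f (circleMap c r θ) = (2 * π) • f c := by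
    have hperiodic : Function.Periodic (fun θ => f (circleMap c r θ)) (2 * π) :=
      (periodic_circleMap c r).comp f
    have hshift := hperiodic.intervalIntegral_add_eq 0 (-π)
    rw [zero_add, neg_add_eq_sub, two_mul, add_sub_cancel_right, ← two_mul] at hshift
    rw [← integral_Ioc_eq_integral_Ioo,
      ← intervalIntegral.integral_of_le (neg_le_self Real.pi_pos.le), ← hshift,
      ← hf.circleAverage, Real.circleAverage_def, smul_inv_smul₀ Real.two_pi_pos.ne']
  calc ∫⁻ _ in Ioo (-π) π, ‖f c‖ₑ = ‖(2 * π) • f c‖ₑ := by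
        rw [setLIntegral_const, Real.volume_Ioo, sub_neg_eq_add, ← two_mul, enorm_smul,
          Real.enorm_of_nonneg Real.two_pi_pos.le, mul_comm]
    _ ≤ ∫⁻ θ in Ioo (-π) π, ‖f (circleMap c r θ)‖ₑ := by
        rw [← integral_eq]
        exact enorm_integral_le_lintegral_enorm _

theorem volume_ball_mul_enorm_center_le_lintegral [CompleteSpace F] {f : ℂ → F} {c : ℂ} {R : ℝ}
    (hf : DifferentiableOn ℂ f (ball c R)) :
    volume (ball c R) * ‖f c‖ₑ ≤ ∫⁻ z in ball c R, ‖f z‖ₑ := by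
  have hmeas : Measurable ((ball c R).indicator fun z => ‖f z‖ₑ) := by
    classical
    exact hf.continuousOn.enorm.measurable_piecewise continuousOn_const measurableSet_ball
  rw [mul_comm, ← setLIntegral_const, ← lintegral_indicator measurableSet_ball,
    ← lintegral_indicator measurableSet_ball, lintegral_eq_lintegral_circleMap hmeas c,
    lintegral_eq_lintegral_circleMap (measurable_const.indicator measurableSet_ball) c]
  refine setLIntegral_mono' measurableSet_Ioi fun r (hr : 0 < r) => ?_
  simp only [lintegral_const_mul' _ _ ENNReal.ofReal_ne_top]
  gcongr ENNReal.ofReal r * ?_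
  have circleMap_mem_iff (θ : ℝ) : circleMap c r θ ∈ ball c R ↔ r < R := by
    rw [mem_ball, dist_eq_norm, circleMap_sub_center, norm_circleMap_zero, abs_of_pos hr]
  by_cases hrR : r < R
  · have hsubset : closedBall c |r| ⊆ ball c R :=
      closedBall_subset_ball (by rwa [abs_of_pos hr])
    simpa only [indicator, circleMap_mem_iff, hrR, if_true] using
      lintegral_enorm_center_le_lintegral_circleMap (hf.diffContOnCl_ball hsubset)
  · simp only [indicator, circleMap_mem_iff, hrR, if_false, le_refl]

theorem volume_ball_mul_enorm_center_le_eLpNorm [CompleteSpace F] {f : ℂ → F} {c : ℂ} {R : ℝ}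
    (hf : DifferentiableOn ℂ f (ball c R)) {p : ℝ≥0∞} (hp : 1 ≤ p) :
    volume (ball c R) * ‖f c‖ₑ ≤
      eLpNorm f p (volume.restrict (ball c R)) * volume (ball c R) ^ (1 - 1 / p.toReal) := by
  have hmeas : AEStronglyMeasurable f (volume.restrict (ball c R)) :=
    hf.continuousOn.aestronglyMeasurable measurableSet_ball
  have holder := eLpNorm_le_eLpNorm_mul_rpow_measure_univ hp hmeas
  rw [Measure.restrict_apply_univ, ENNReal.toReal_one, div_one,
    eLpNorm_one_eq_lintegral_enorm] at holder
  exact (volume_ball_mul_enorm_center_le_lintegral hf).trans holder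

theorem eq_zero_of_differentiable_of_memLp [CompleteSpace F] {f : ℂ → F}
    (hf : Differentiable ℂ f) {p : ℝ≥0∞} (hp : 1 ≤ p) (hp_top : p ≠ ∞)
    (hLp : MemLp f p volume) : f = 0 := by
  let V : ℝ≥0∞ := volume (ball (0 : ℂ) 1)
  let K : ℝ≥0∞ := eLpNorm f p volume * V ^ (1 - 1 / p.toReal)
  have hV (c : ℂ) : volume (ball c 1) = V := by simp only [V, Complex.volume_ball]
  have hV_top : V ≠ ∞ := measure_ball_lt_top.ne
  have hV_zero : V ≠ 0 := (measure_ball_pos volume 0 one_pos).ne'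
  have hK_top : K ≠ ∞ :=
    ENNReal.mul_ne_top hLp.eLpNorm_ne_top (ENNReal.rpow_ne_top_of_ne_zero hV_zero hV_top)
  have bound (c : ℂ) : V * ‖f c‖ₑ ≤ K := by
    have h := volume_ball_mul_enorm_center_le_eLpNorm (hf.differentiableOn (s := ball c 1)) hp
    rw [hV] at h
    exact h.trans (mul_le_mul_left (eLpNorm_restrict_le f p volume (ball c 1)) _)
  have bounded : Bornology.IsBounded (range f) := by
    refine isBounded_iff_forall_norm_le.2 ⟨(K / V).toReal, forall_mem_range.2 fun c => ?_⟩
    rw [← toReal_enorm]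
    refine ENNReal.toReal_mono (ENNReal.div_ne_top hK_top hV_zero) ?_
    exact (ENNReal.le_div_iff_mul_le (.inl hV_zero) (.inl hV_top)).2 (mul_comm V _ ▸ bound c)
  obtain ⟨a, rfl⟩ := hf.exists_eq_const_of_bounded bounded
  have ha : a = 0 := by
    simpa using (memLp_const_iff (zero_lt_one.trans_le hp).ne' hp_top).1 hLp
  rw [ha, Function.const_zero]

end Liouville


section OneForm

theorem differentiable_complex_of_closed_of_coclosed {E : Type*} [NormedAddCommGroup E]
    [NormedSpace ℝ E] {α : E → E →L[ℝ] ℝ} (hα : Differentiable ℝ α) (L : ℂ →L[ℝ] E)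
    (hclosed : ∀ x u v, fderiv ℝ α x u v = fderiv ℝ α x v u)
    (hcoclosed : ∀ x, fderiv ℝ α x (L 1) (L 1) + fderiv ℝ α x (L I) (L I) = 0) :
    Differentiable ℂ fun z => (α (L z) (L 1) : ℂ) - α (L z) (L I) * I := by
  intro z
  have hform (v : E) : HasFDerivAt (fun z => α (L z) v) ((fderiv ℝ α (L z)).flip v ∘L L) z := by
    have hcomp := (hα (L z)).hasFDerivAt.comp z L.hasFDerivAt
    exact (hcomp.clm_apply (hasFDerivAt_const v z)).congr_fderiv (by ext; simp)
  have hcoeff (v : E) : HasFDerivAt (fun z => (α (L z) v : ℂ))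
      (ofRealCLM ∘L (fderiv ℝ α (L z)).flip v ∘L L) z :=
    ofRealCLM.hasFDerivAt.comp z (hform v)
  have hderiv : HasFDerivAt (fun z => (α (L z) (L 1) : ℂ) - α (L z) (L I) * I) _ z :=
    (hcoeff (L 1)).sub ((hcoeff (L I)).mul_const I)
  have hcurl := hclosed (L z) (L I) (L 1)
  have hdiv := eq_neg_of_add_eq_zero_right (hcoclosed (L z))
  refine differentiableAt_complex_iff_differentiableAt_real.2 ⟨hderiv.differentiableAt, ?_⟩
  rw [hderiv.fderiv]
  apply Complex.ext <;> simp [hcurl, hdiv]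

variable {E : Type*} [NormedAddCommGroup E] [InnerProductSpace ℝ E] [FiniteDimensional ℝ E]
  [MeasurableSpace E] [BorelSpace E]

theorem eq_zero_of_closed_of_coclosed_of_memLp (b : OrthonormalBasis (Fin 2) ℝ E)
    {α : E → E →L[ℝ] ℝ} (hα : Differentiable ℝ α)
    (hclosed : ∀ x u v, fderiv ℝ α x u v = fderiv ℝ α x v u)
    (hcoclosed : ∀ x, ∑ i, fderiv ℝ α x (b i) (b i) = 0)
    {p : ℝ≥0∞} (hp : 1 ≤ p) (hp_top : p ≠ ∞) (hLp : MemLp α p volume) : α = 0 := by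
  let L : ℂ ≃ₗᵢ[ℝ] E := orthonormalBasisOneI.equiv b (Equiv.refl _)
  have hL_one : L 1 = b 0 := by
    simpa using orthonormalBasisOneI.equiv_apply_basis b (Equiv.refl _) 0
  have hL_I : L I = b 1 := by
    simpa using orthonormalBasisOneI.equiv_apply_basis b (Equiv.refl _) 1
  let g : ℂ → ℂ := fun z => (α (L z) (b 0) : ℂ) - α (L z) (b 1) * I
  have hg : Differentiable ℂ g := by
    have := differentiable_complex_of_closed_of_coclosed hα
      (L.toContinuousLinearEquiv : ℂ →L[ℝ] E) hclosed
      (fun x => by simpa [hL_one, hL_I, Fin.sum_univ_two] using hcoclosed x)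
    simpa [hL_one, hL_I] using this
  have norm_coeff_le (z : ℂ) (i : Fin 2) : ‖(α (L z) (b i) : ℂ)‖ ≤ ‖α (L z)‖ := by
    simpa using (α (L z)).le_opNorm (b i)
  have norm_g_le (z : ℂ) : ‖g z‖ ≤ 2 * ‖α (L z)‖ :=
    calc ‖g z‖ ≤ ‖(α (L z) (b 0) : ℂ)‖ + ‖(α (L z) (b 1) : ℂ) * I‖ := norm_sub_le _ _
      _ ≤ 2 * ‖α (L z)‖ := by
        rw [norm_mul, norm_I, mul_one]
        linarith [norm_coeff_le z 0, norm_coeff_le z 1]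
  have g_memLp : MemLp g p volume :=
    (hLp.comp_measurePreserving L.measurePreserving).of_le_mul
      hg.continuous.aestronglyMeasurable (.of_forall norm_g_le)
  have g_eq_zero := eq_zero_of_differentiable_of_memLp hg hp hp_top g_memLp
  ext1 x
  have hx : (α x (b 0) : ℂ) - α x (b 1) * I = 0 := by
    simpa [g] using congrFun g_eq_zero (L.symm x)
  have hcoeff : ∀ i, α x (b i) = 0 := by
    rw [Fin.forall_fin_two]
    simpa [Complex.ext_iff] using hx
  exact ContinuousLinearMap.coe_injective (b.toBasis.ext fun i => by simpa using hcoeff i)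

end OneForm

section SecondDerivative

variable {E F : Type*} [NormedAddCommGroup E] [NormedAddCommGroup F] [NormedSpace ℝ F]

theorem differentiable_fderiv_of_contDiff_two [NormedSpace ℝ E] {w : E → F}
    (hw : ContDiff ℝ 2 w) :
    Differentiable ℝ (fderiv ℝ w) :=
  (hw.fderiv_right (m := 1) le_rfl).differentiable one_ne_zero

theorem laplacian_eq_sum_fderiv_fderiv [InnerProductSpace ℝ E] [FiniteDimensional ℝ E] {ι : Type*}
    [Fintype ι] (b : OrthonormalBasis ι ℝ E) (w : E → F) (x : E) :
    Δ w x = ∑ i, fderiv ℝ (fderiv ℝ w) x (b i) (b i) := by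
  simp [laplacian_eq_iteratedFDeriv_orthonormalBasis w b, iteratedFDeriv_two_apply]

end SecondDerivative

section AngularForm

variable {E F : Type*} [NormedAddCommGroup E] [NormedAddCommGroup F] [InnerProductSpace ℝ F]

theorem inner_fderiv_eq_zero_of_norm_eq [NormedSpace ℝ E] {w : E → F} {r : ℝ}
    (hnorm : ∀ x, ‖w x‖ = r) (x v : E) : ⟪w x, fderiv ℝ w x v⟫_ℝ = 0 := by
  by_cases hw : DifferentiableAt ℝ w x
  · have hconst : HasFDerivAt (fun y => ‖w y‖ ^ 2) (0 : E →L[ℝ] ℝ) x := by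
      simpa only [hnorm] using hasFDerivAt_const (r ^ 2) x
    simpa using DFunLike.congr_fun (hw.hasFDerivAt.norm_sq.unique hconst) v
  · simp [fderiv_zero_of_not_differentiableAt hw]

variable [Fact (finrank ℝ F = 2)] (o : Orientation ℝ F (Fin 2))

theorem areaForm_eq_zero_of_inner_eq_zero {a x y : F} (ha : a ≠ 0) (hx : ⟪a, x⟫_ℝ = 0)
    (hy : ⟪a, y⟫_ℝ = 0) : o.areaForm x y = 0 := by
  have h := o.inner_mul_areaForm_sub a x y
  rw [hx, hy, zero_mul, mul_zero, sub_zero] at h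
  exact (mul_eq_zero.1 h.symm).resolve_left (pow_ne_zero 2 (norm_ne_zero_iff.2 ha))

/-- The pullback `w^* dθ` of the angular one-form under a map `w` to the unit circle of an
oriented plane: if `w = e^{iφ}`, this is `dφ`. Writing it as `v ↦ ω(w, ∂_v w)` avoids choosing a
lift `φ`. -/
def angularForm [NormedSpace ℝ E] (w : E → F) (x : E) : E →L[ℝ] ℝ :=
  o.areaForm' (w x) ∘L fderiv ℝ w x

section NormedSpace

variable [NormedSpace ℝ E] {w : E → F}

theorem angularForm_apply (w : E → F) (x v : E) :
    angularForm o w x v = o.areaForm (w x) (fderiv ℝ w x v) := rfl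

theorem norm_angularForm_le (hunit : ∀ x, ‖w x‖ = 1) (x : E) :
    ‖angularForm o w x‖ ≤ ‖fderiv ℝ w x‖ := by
  refine ContinuousLinearMap.opNorm_le_bound _ (norm_nonneg _) fun v => ?_
  calc ‖angularForm o w x v‖ = |o.areaForm (w x) (fderiv ℝ w x v)| := by
        rw [angularForm_apply, Real.norm_eq_abs]
    _ ≤ ‖w x‖ * ‖fderiv ℝ w x v‖ := o.abs_areaForm_le _ _
    _ ≤ ‖fderiv ℝ w x‖ * ‖v‖ := by
      rw [hunit, one_mul]
      exact (fderiv ℝ w x).le_opNorm v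

theorem fderiv_eq_zero_of_angularForm_eq_zero (hunit : ∀ x, ‖w x‖ = 1) {x : E}
    (hzero : angularForm o w x = 0) : fderiv ℝ w x = 0 := by
  ext1 v
  have hangular : o.areaForm (w x) (fderiv ℝ w x v) = 0 := by
    rw [← angularForm_apply, hzero, zero_apply]
  have hpythagoras := o.inner_sq_add_areaForm_sq (w x) (fderiv ℝ w x v)
  rw [inner_fderiv_eq_zero_of_norm_eq hunit, hangular, hunit, one_pow, one_mul] at hpythagoras
  simpa using hpythagoras.symm

theorem hasFDerivAt_angularForm {x : E} (hw : DifferentiableAt ℝ w x)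
    (hw' : DifferentiableAt ℝ (fderiv ℝ w) x) :
    HasFDerivAt (angularForm o w)
      ((ContinuousLinearMap.compL ℝ E F ℝ (o.areaForm' (w x))) ∘L fderiv ℝ (fderiv ℝ w) x +
        ((ContinuousLinearMap.compL ℝ E F ℝ).flip (fderiv ℝ w x)) ∘L
          (o.areaForm' ∘L fderiv ℝ w x)) x :=
  (o.areaForm'.hasFDerivAt.comp x hw.hasFDerivAt).clm_comp hw'.hasFDerivAt

theorem differentiable_angularForm (hw : ContDiff ℝ 2 w) : Differentiable ℝ (angularForm o w) :=
  fun x => (hasFDerivAt_angularForm o (hw.differentiable two_ne_zero x)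
    (differentiable_fderiv_of_contDiff_two hw x)).differentiableAt

theorem fderiv_angularForm_apply (hw : ContDiff ℝ 2 w) (x u v : E) :
    fderiv ℝ (angularForm o w) x u v =
      o.areaForm (w x) (fderiv ℝ (fderiv ℝ w) x u v) +
        o.areaForm (fderiv ℝ w x u) (fderiv ℝ w x v) := by
  rw [(hasFDerivAt_angularForm o (hw.differentiable two_ne_zero x)
    (differentiable_fderiv_of_contDiff_two hw x)).fderiv]
  rfl

theorem fderiv_angularForm_comm (hw : ContDiff ℝ 2 w) (hunit : ∀ x, ‖w x‖ = 1) (x u v : E) :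
    fderiv ℝ (angularForm o w) x u v = fderiv ℝ (angularForm o w) x v u := by
  have hsymm : IsSymmSndFDerivAt ℝ w x := hw.contDiffAt.isSymmSndFDerivAt (by simp)
  have hne : w x ≠ 0 := norm_ne_zero_iff.1 (by simp [hunit])
  have hcollinear (u v : E) : o.areaForm (fderiv ℝ w x u) (fderiv ℝ w x v) = 0 :=
    areaForm_eq_zero_of_inner_eq_zero o hne (inner_fderiv_eq_zero_of_norm_eq hunit x u)
      (inner_fderiv_eq_zero_of_norm_eq hunit x v)
  rw [fderiv_angularForm_apply o hw, fderiv_angularForm_apply o hw, hcollinear, hcollinear,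
    hsymm.eq]

end NormedSpace

variable [InnerProductSpace ℝ E] [FiniteDimensional ℝ E] {w : E → F}

theorem sum_fderiv_angularForm {ι : Type*} [Fintype ι] (b : OrthonormalBasis ι ℝ E)
    (hw : ContDiff ℝ 2 w) (x : E) :
    ∑ i, fderiv ℝ (angularForm o w) x (b i) (b i) = o.areaForm (w x) (Δ w x) := by
  simp only [fderiv_angularForm_apply o hw, o.areaForm_apply_self, add_zero,
    laplacian_eq_sum_fderiv_fderiv b, map_sum]

/-- For unit `w`, differentiating `‖w‖² = 1` twice forces `c = -|∇w|²`, so `hharmonic` is the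
harmonic map equation. The bound `p ≠ ∞` cannot be dropped: consider `(cos x₁, sin x₁)`. -/
theorem stmt_5_general [Fact (finrank ℝ E = 2)] [MeasurableSpace E] [BorelSpace E]
    (hw : ContDiff ℝ 2 w) (hunit : ∀ x, ‖w x‖ = 1)
    (hharmonic : ∀ x, ∃ c : ℝ, Δ w x = c • w x)
    {p : ℝ≥0∞} (hp : 1 ≤ p) (hp_top : p ≠ ∞) (henergy : MemLp (fderiv ℝ w) p volume) :
    ∀ x y, w x = w y := by
  have finrank_E : finrank ℝ E = 2 := Fact.out
  have finrank_F : finrank ℝ F = 2 := Fact.out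
  have : FiniteDimensional ℝ F := .of_fact_finrank_eq_two
  let b := (stdOrthonormalBasis ℝ E).reindex (finCongr finrank_E)
  let o := ((stdOrthonormalBasis ℝ F).reindex (finCongr finrank_F)).toBasis.orientation
  have hcoclosed (x : E) : ∑ i, fderiv ℝ (angularForm o w) x (b i) (b i) = 0 := by
    obtain ⟨c, hc⟩ := hharmonic x
    rw [sum_fderiv_angularForm o b hw, hc, map_smul, o.areaForm_apply_self, smul_zero]
  have hLp : MemLp (angularForm o w) p volume :=
    henergy.of_le (differentiable_angularForm o hw).continuous.aestronglyMeasurable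
      (.of_forall (norm_angularForm_le o hunit))
  have hzero : angularForm o w = 0 :=
    eq_zero_of_closed_of_coclosed_of_memLp b (differentiable_angularForm o hw)
      (fderiv_angularForm_comm o hw hunit) hcoclosed hp hp_top hLp
  exact is_const_of_fderiv_eq_zero (hw.differentiable two_ne_zero) fun x =>
    fderiv_eq_zero_of_angularForm_eq_zero o hunit (congrFun hzero x)

end AngularForm

section EuclideanPlane

theorem sq_opNorm_le_sum_sq_norm_apply {ι E F : Type*} [Fintype ι] [NormedAddCommGroup E]
    [InnerProductSpace ℝ E] [NormedAddCommGroup F] [NormedSpace ℝ F]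
    (b : OrthonormalBasis ι ℝ E) (T : E →L[ℝ] F) : ‖T‖ ^ 2 ≤ ∑ i, ‖T (b i)‖ ^ 2 := by
  refine Real.le_sqrt (norm_nonneg _) (Finset.sum_nonneg fun _ _ => sq_nonneg _) |>.1 ?_
  refine T.opNorm_le_bound (Real.sqrt_nonneg _) fun x => ?_
  calc ‖T x‖ = ‖∑ i, ⟪b i, x⟫_ℝ • T (b i)‖ := by
        simp only [← map_smul, ← map_sum, b.sum_repr']
    _ ≤ ∑ i, ‖T (b i)‖ * ‖⟪b i, x⟫_ℝ‖ :=
        norm_sum_le_of_le _ fun i _ => by rw [norm_smul, mul_comm]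
    _ ≤ √(∑ i, ‖T (b i)‖ ^ 2) * √(∑ i, ‖⟪b i, x⟫_ℝ‖ ^ 2) :=
        Real.sum_mul_le_sqrt_mul_sqrt _ _ _
    _ = √(∑ i, ‖T (b i)‖ ^ 2) * ‖x‖ := by
        rw [b.sum_sq_norm_inner_right, Real.sqrt_sq (norm_nonneg x)]

instance fact_finrank_euclideanSpace_fin_two : Fact (finrank ℝ (EuclideanSpace ℝ (Fin 2)) = 2) :=
  ⟨finrank_euclideanSpace_fin⟩

theorem basisFun_eq_E2 (i : Fin 2) : EuclideanSpace.basisFun (Fin 2) ℝ i = E2 i :=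
  EuclideanSpace.basisFun_apply _ _ i

variable {w : EuclideanSpace ℝ (Fin 2) → EuclideanSpace ℝ (Fin 2)}

theorem lap2_eq_laplacian (hw : ContDiff ℝ 2 w) : lap2 w = Δ w := by
  ext1 x
  rw [laplacian_eq_sum_fderiv_fderiv (EuclideanSpace.basisFun (Fin 2) ℝ), lap2]
  refine Finset.sum_congr rfl fun i _ => ?_
  have happly := (differentiable_fderiv_of_contDiff_two hw x).hasFDerivAt.clm_apply
    (hasFDerivAt_const (E2 i) x)
  rw [basisFun_eq_E2, happly.fderiv]
  simp

theorem laplacian_eq_neg_gradSq2_smul (hw : ContDiff ℝ 2 w) {x : EuclideanSpace ℝ (Fin 2)}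
    (heq : lap2 w x + gradSq2 w x • w x = 0) : Δ w x = -gradSq2 w x • w x := by
  rw [← lap2_eq_laplacian hw, neg_smul]
  exact eq_neg_of_add_eq_zero_left heq

theorem sq_norm_fderiv_le_gradSq2 (x : EuclideanSpace ℝ (Fin 2)) :
    ‖fderiv ℝ w x‖ ^ 2 ≤ gradSq2 w x := by
  simpa only [gradSq2, basisFun_eq_E2, EuclideanSpace.real_norm_sq_eq] using
    sq_opNorm_le_sum_sq_norm_apply (EuclideanSpace.basisFun (Fin 2) ℝ) (fderiv ℝ w x)

theorem memLp_two_fderiv_of_lintegral_gradSq2_lt_top (hw : ContDiff ℝ 1 w)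
    (henergy : (∫⁻ x, ENNReal.ofReal (gradSq2 w x)) < ⊤) : MemLp (fderiv ℝ w) 2 volume := by
  have hcont : Continuous (fderiv ℝ w) := hw.continuous_fderiv one_ne_zero
  refine (memLp_two_iff_integrable_sq_norm hcont.aestronglyMeasurable).2
    ⟨(hcont.norm.pow 2).aestronglyMeasurable, ?_⟩
  rw [hasFiniteIntegral_iff_ofReal (.of_forall fun _ => sq_nonneg _)]
  exact (lintegral_mono fun x => ENNReal.ofReal_le_ofReal (sq_norm_fderiv_le_gradSq2 x)).trans_lt
    henergy

end EuclideanPlane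

/-- There is no nonconstant finite-energy smooth harmonic map from `ℝ²` to the unit
circle `S¹ ⊂ ℝ²`: if `‖w‖ ≡ 1`, `Δw + |∇w|² w = 0`, and `∫ |∇w|² < ∞`, then `w` is
constant. -/
theorem stmt_5 (w : EuclideanSpace ℝ (Fin 2) → EuclideanSpace ℝ (Fin 2))
    (hw : ContDiff ℝ (⊤ : ℕ∞) w)
    (hunit : ∀ x, ‖w x‖ = 1)
    (heq : ∀ x, lap2 w x + gradSq2 w x • w x = 0)
    (henergy : (∫⁻ x : EuclideanSpace ℝ (Fin 2), ENNReal.ofReal (gradSq2 w x)) < ⊤) :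
    ∀ x y, w x = w y := by
  have hw₂ : ContDiff ℝ 2 w := hw.of_le (WithTop.coe_le_coe.2 le_top)
  exact stmt_5_general hw₂ hunit (fun x => ⟨_, laplacian_eq_neg_gradSq2_smul hw₂ (heq x)⟩)
    one_le_two ENNReal.ofNat_ne_top
    (memLp_two_fderiv_of_lintegral_gradSq2_lt_top (hw₂.of_le one_le_two) henergy)

end
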